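/- Let V₁, V₂: ℝ → [0,∞) be Orlicz functions with V₁(x)/V₂(x) → ∞ as |x| → ∞, fix R ∈ (0,∞) and k ∈ ℕ, and let ν* be the unique maximizer of { h(ν) : m_{V₁}(ν) ≤ 1, m_{V₂}(ν) ∈ [0,R] }. For n ∈ ℕ let X₁^{n,V₁} be uniformly distributed on B_1^{n,V₁}. Then the law of (X₁^{n,V₁}(1), …, X₁^{n,V₁}(k)) conditioned on the event { (1/n) Σ_{i=1}^n V₂(X₁^{n,V₁}(i)) ≤ R + ε } converges weakly, as n → ∞ followed by ε → 0, to the k-fold product measure ν*^{⊗k}. -/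

import Mathlib

open MeasureTheory Real Filter Topology ENNReal Classical

noncomputable section

/-- An Orlicz function: convex, symmetric, vanishing only at `0`, nonnegative. -/
def IsOrlicz (V : ℝ → ℝ) : Prop :=
  ConvexOn ℝ Set.univ V ∧ (∀ x, V (-x) = V x) ∧ V 0 = 0 ∧ (∀ x, x ≠ 0 → 0 < V x) ∧
    (∀ x, 0 ≤ V x)

/-- The Orlicz ball `B_R^{n,V} = {x ∈ ℝⁿ : ∑ V(x_k) ≤ R n}`. -/
def OrliczBall (V : ℝ → ℝ) (R : ℝ) (n : ℕ) : Set (Fin n → ℝ) :=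
  {x | ∑ i, V (x i) ≤ R * n}

/-- The uniform distribution on the Orlicz ball (normalized Lebesgue measure). -/
def unifBall (V : ℝ → ℝ) (R : ℝ) (n : ℕ) : Measure (Fin n → ℝ) :=
  (volume (OrliczBall V R n))⁻¹ • volume.restrict (OrliczBall V R n)

/-- The `V`-moment `m_V(μ) = ∫ V dμ`, as a lower integral in `[0,∞]`. -/
def mV (V : ℝ → ℝ) (μ : Measure ℝ) : ℝ≥0∞ := ∫⁻ x, ENNReal.ofReal (V x) ∂μ

/-- Differential entropy `h(ν) = -∫ log(dν/dx) dν`, valued in `EReal`, with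
`h(ν) = ⊥` when `ν` is not absolutely continuous (or the integral does not exist). -/
def diffEnt (ν : Measure ℝ) : EReal :=
  if ν ≪ volume ∧ Integrable (fun x => Real.log (ν.rnDeriv volume x).toReal) ν
  then ((-(∫ x, Real.log (ν.rnDeriv volume x).toReal ∂ν) : ℝ) : EReal) else ⊥

/-- Projection onto the first `k` coordinates. -/
def proj (k n : ℕ) (x : Fin n → ℝ) : Fin k → ℝ :=
  fun i => if h : (i : ℕ) < n then x ⟨i, h⟩ else 0

/-!
Conditioning the uniform law on the ball yields the uniform law `P` on the set `K_n` cut out by both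
constraints, and the entropy of `P` is `log vol K_n`. The constraints hold with room to spare for a
mixture of the maximizer `p` with a low-energy law `u`, so by the law of large numbers
`log vol K_n ≥ n (H(p) - γ)`. The one-dimensional marginal `g` of `P` satisfies the constraints
itself, up to an admixture of `u`, and maximality of `H(p)` on the segment from `p` to
`(1 - t) g + t u` bounds the cross entropy under `g` of the midpoint `r` of this segment by
`H(p) + O(t)`. As the coordinates of `P` are exchangeable,
`KL(P ‖ r^{⊗n}) = n (cross entropy of r under g) - log vol K_n` is then at most `n η` with `η`
small. Pinsker's inequality over `n / (k + 1)` disjoint blocks of coordinates brings the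
`k`-dimensional marginal of `P` close to `r^{⊗k}` in total variation; over single coordinates, it
brings `g` close to `r`, which forces `r` close to `p`.
-/

section Entropy

variable {α : Type*} [MeasurableSpace α] {μ ν κ p : Measure α}

/-- `ν` has a density with respect to `μ`, and the entropy `-∫ log (dν/dμ) dν` is finite. -/
structure HasFiniteEntropy (μ ν : Measure α) : Prop where
  ac : ν ≪ μ
  integrable_llr : Integrable (llr ν μ) ν

/-- The cross entropy `-∫ log (dκ/dμ) dν` of `κ` under `ν`, relative to the reference measure `μ`.
Its diagonal is the entropy `-∫ log (dν/dμ) dν`, which for `μ = volume` is the differential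
entropy; the value is `0` if `log (dκ/dμ)` is not `ν`-integrable. -/
def crossEntropy (μ ν κ : Measure α) : ℝ := -∫ x, llr κ μ x ∂ν

/-- The entropy `-∫ log (dν/dμ) dν` of `ν` relative to the reference measure `μ`. -/
abbrev entropy (μ ν : Measure α) : ℝ := crossEntropy μ ν ν

lemma llr_ae_eq_llr_add_llr [SigmaFinite μ] [SigmaFinite ν] [SigmaFinite κ] (hνκ : ν ≪ κ)
    (hκμ : κ ≪ μ) : llr ν μ =ᵐ[ν] llr ν κ + llr κ μ := by
  filter_upwards [(hνκ.trans hκμ).ae_le (Measure.rnDeriv_mul_rnDeriv (κ := μ) hνκ),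
    Measure.rnDeriv_pos hνκ, hνκ.ae_le (Measure.rnDeriv_lt_top ν κ),
    hνκ.ae_le (Measure.rnDeriv_pos hκμ), (hνκ.trans hκμ).ae_le (Measure.rnDeriv_lt_top κ μ)]
    with x hmul hν_pos hν_lt hκ_pos hκ_lt
  simp only [llr, Pi.add_apply, ← hmul, Pi.mul_apply, ENNReal.toReal_mul]
  exact log_mul (ENNReal.toReal_pos hν_pos.ne' hν_lt.ne).ne'
    (ENNReal.toReal_pos hκ_pos.ne' hκ_lt.ne).ne'

lemma integrable_llr_of_le_smul [IsFiniteMeasure κ] {C : ℝ≥0∞} (hC : C ≠ ∞) (h : ν ≤ C • κ) :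
    Integrable (llr ν κ) ν := by
  have hac : ν ≪ κ := Measure.absolutelyContinuous_of_le_smul h
  have : IsFiniteMeasure ν := ⟨(h Set.univ).trans_lt
    (ENNReal.mul_lt_top hC.lt_top (measure_lt_top κ _))⟩
  have hbound : ∀ᵐ x ∂κ, ν.rnDeriv κ x ≤ C := by
    refine ae_le_of_forall_setLIntegral_le_of_sigmaFinite (by fun_prop) fun s _ _ => ?_
    rw [setLIntegral_const]
    exact (Measure.setLIntegral_rnDeriv_le s).trans (h s)
  obtain ⟨B, hB⟩ := isCompact_Icc.exists_bound_of_continuousOn (s := Set.Icc 0 C.toReal)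
    continuous_mul_log.continuousOn
  rw [← integrable_rnDeriv_mul_log_iff hac]
  refine .of_bound (by fun_prop) B ?_
  filter_upwards [hbound] with x hx
  exact hB _ ⟨ENNReal.toReal_nonneg, ENNReal.toReal_mono hC hx⟩

lemma integral_llr_nonneg [IsProbabilityMeasure ν] [IsProbabilityMeasure κ] (hac : ν ≪ κ)
    (hint : Integrable (llr ν κ) ν) : 0 ≤ ∫ x, llr ν κ x ∂ν := by
  simpa using InformationTheory.integral_llr_add_sub_measure_univ_nonneg hac hint

lemma integral_llr_eq_crossEntropy_sub_entropy [SigmaFinite μ] [SigmaFinite ν] [SigmaFinite κ]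
    (hνκ : ν ≪ κ) (hκμ : κ ≪ μ) (hν : Integrable (llr ν μ) ν) (hκ : Integrable (llr κ μ) ν) :
    ∫ x, llr ν κ x ∂ν = crossEntropy μ ν κ - entropy μ ν := by
  have hchain : llr ν κ =ᵐ[ν] llr ν μ - llr κ μ := by
    filter_upwards [llr_ae_eq_llr_add_llr hνκ hκμ] with x hx
    simp [hx]
  rw [integral_congr_ae hchain, integral_sub' hν hκ, entropy, crossEntropy, crossEntropy]
  ring

namespace HasFiniteEntropy

lemma integrable_llr_of_le_smul [SigmaFinite μ] [IsFiniteMeasure ν] [IsFiniteMeasure κ]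
    (hν : HasFiniteEntropy μ ν) (hκ : κ ≪ μ) {C : ℝ≥0∞} (hC : C ≠ ∞) (h : ν ≤ C • κ) :
    Integrable (llr κ μ) ν := by
  refine (hν.integrable_llr.sub (_root_.integrable_llr_of_le_smul hC h)).congr ?_
  filter_upwards [llr_ae_eq_llr_add_llr (Measure.absolutelyContinuous_of_le_smul h) hκ] with x hx
  simp [hx]

lemma entropy_le_crossEntropy [SigmaFinite μ] [IsProbabilityMeasure ν] [IsProbabilityMeasure κ]
    (hν : HasFiniteEntropy μ ν) (hκ : κ ≪ μ) {C : ℝ≥0∞} (hC : C ≠ ∞) (h : ν ≤ C • κ) :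
    entropy μ ν ≤ crossEntropy μ ν κ := by
  have hac : ν ≪ κ := Measure.absolutelyContinuous_of_le_smul h
  have hkl := integral_llr_nonneg hac (_root_.integrable_llr_of_le_smul hC h)
  rw [integral_llr_eq_crossEntropy_sub_entropy hac hκ hν.integrable_llr
    (hν.integrable_llr_of_le_smul hκ hC h)] at hkl
  linarith

lemma of_le_smul_restrict [SigmaFinite μ] {S : Set α} (hSm : MeasurableSet S) (hS : μ S ≠ ∞)
    {C : ℝ≥0∞} (hC : C ≠ ∞) (h : ν ≤ C • μ.restrict S) : HasFiniteEntropy μ ν := by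
  have : IsFiniteMeasure (μ.restrict S) := ⟨by simpa using hS.lt_top⟩
  have : IsFiniteMeasure ν := ⟨(h Set.univ).trans_lt
    (ENNReal.mul_lt_top hC.lt_top (measure_lt_top _ _))⟩
  have hac : ν ≪ μ.restrict S := Measure.absolutelyContinuous_of_le_smul h
  have hrestrict : llr (μ.restrict S) μ =ᵐ[ν] 0 := by
    filter_upwards [(hac.trans Measure.absolutelyContinuous_restrict).ae_le
      (Measure.rnDeriv_restrict_self μ hSm), hac.ae_le (ae_restrict_mem hSm)] with x hx hxS
    simp [llr, hx, hxS]
  refine ⟨hac.trans Measure.absolutelyContinuous_restrict,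
    (_root_.integrable_llr_of_le_smul hC h).congr ?_⟩
  filter_upwards [llr_ae_eq_llr_add_llr hac Measure.absolutelyContinuous_restrict, hrestrict]
    with x hx hx0
  simp [hx, hx0]

end HasFiniteEntropy

/-- The convex combination `(1 - t) ν + t κ` of two measures, meant for `t ∈ [0, 1]`. -/
def mixture (t : ℝ) (ν κ : Measure α) : Measure α :=
  ENNReal.ofReal (1 - t) • ν + ENNReal.ofReal t • κ

section Mixture

variable {t : ℝ}

instance [IsFiniteMeasure ν] [IsFiniteMeasure κ] : IsFiniteMeasure (mixture t ν κ) := by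
  have := ν.smul_finite (c := ENNReal.ofReal (1 - t)) ENNReal.ofReal_ne_top
  have := κ.smul_finite (c := ENNReal.ofReal t) ENNReal.ofReal_ne_top
  unfold mixture
  infer_instance

lemma isProbabilityMeasure_mixture [IsProbabilityMeasure ν] [IsProbabilityMeasure κ]
    (ht : t ∈ Set.Ioo 0 1) : IsProbabilityMeasure (mixture t ν κ) := by
  constructor
  simp [mixture, ← ENNReal.ofReal_add (sub_pos.2 ht.2).le ht.1.le]

lemma le_smul_mixture_left (ht : t < 1) : ν ≤ (ENNReal.ofReal (1 - t))⁻¹ • mixture t ν κ := by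
  rw [mixture, smul_add, smul_smul,
    ENNReal.inv_mul_cancel (by simpa using ht) ENNReal.ofReal_ne_top, one_smul]
  exact Measure.le_add_right le_rfl

lemma le_smul_mixture_right (ht : 0 < t) : κ ≤ (ENNReal.ofReal t)⁻¹ • mixture t ν κ := by
  rw [mixture, smul_add, smul_smul (ENNReal.ofReal t)⁻¹ (ENNReal.ofReal t),
    ENNReal.inv_mul_cancel (by simpa using ht) ENNReal.ofReal_ne_top, one_smul]
  exact Measure.le_add_left le_rfl

lemma exists_le_smul_mixture_mixture_left {s : ℝ} (hs : 0 < s) (ht : t < 1) :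
    ∃ C ≠ ∞, ν ≤ C • mixture s p (mixture t ν κ) := by
  refine ⟨(ENNReal.ofReal (1 - t))⁻¹ * (ENNReal.ofReal s)⁻¹,
    ENNReal.mul_ne_top (by simpa using ht) (by simpa using hs), ?_⟩
  rw [mul_smul]
  exact (le_smul_mixture_left ht).trans (smul_mono_right _ (le_smul_mixture_right hs))

lemma exists_le_smul_mixture_mixture_right {s : ℝ} (hs : 0 < s) (ht : 0 < t) :
    ∃ C ≠ ∞, κ ≤ C • mixture s p (mixture t ν κ) := by
  refine ⟨(ENNReal.ofReal t)⁻¹ * (ENNReal.ofReal s)⁻¹,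
    ENNReal.mul_ne_top (by simpa using ht) (by simpa using hs), ?_⟩
  rw [mul_smul]
  exact (le_smul_mixture_right ht).trans (smul_mono_right _ (le_smul_mixture_right hs))

lemma integral_mixture (ht : t ∈ Set.Ioo 0 1) {g : α → ℝ} (hν : Integrable g ν)
    (hκ : Integrable g κ) :
    ∫ x, g x ∂mixture t ν κ = (1 - t) * ∫ x, g x ∂ν + t * ∫ x, g x ∂κ := by
  rw [mixture, integral_add_measure (hν.smul_measure ENNReal.ofReal_ne_top)
    (hκ.smul_measure ENNReal.ofReal_ne_top), integral_smul_measure, integral_smul_measure,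
    ENNReal.toReal_ofReal (sub_pos.2 ht.2).le, ENNReal.toReal_ofReal ht.1.le, smul_eq_mul,
    smul_eq_mul]

lemma mixture_real [IsFiniteMeasure ν] [IsFiniteMeasure κ] (ht : t ∈ Set.Ioo 0 1) (B : Set α) :
    (mixture t ν κ).real B = (1 - t) * ν.real B + t * κ.real B := by
  have := ν.smul_finite (c := ENNReal.ofReal (1 - t)) ENNReal.ofReal_ne_top
  have := κ.smul_finite (c := ENNReal.ofReal t) ENNReal.ofReal_ne_top
  rw [mixture, measureReal_add_apply, measureReal_ennreal_smul_apply,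
    measureReal_ennreal_smul_apply, ENNReal.toReal_ofReal (sub_pos.2 ht.2).le,
    ENNReal.toReal_ofReal ht.1.le]

lemma mixture_absolutelyContinuous (hν : ν ≪ μ) (hκ : κ ≪ μ) : mixture t ν κ ≪ μ :=
  (hν.smul_left _).add_left (hκ.smul_left _)

lemma crossEntropy_mixture (ht : t ∈ Set.Ioo 0 1) (hν : Integrable (llr p μ) ν)
    (hκ : Integrable (llr p μ) κ) :
    crossEntropy μ (mixture t ν κ) p = (1 - t) * crossEntropy μ ν p + t * crossEntropy μ κ p := by
  simp only [crossEntropy, integral_mixture ht hν hκ]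
  ring

namespace HasFiniteEntropy

variable [SigmaFinite μ] [IsFiniteMeasure ν] [IsFiniteMeasure κ]

lemma integrable_llr_mixture_left (hν : HasFiniteEntropy μ ν) (hκ : κ ≪ μ) (ht : t < 1) :
    Integrable (llr (mixture t ν κ) μ) ν :=
  hν.integrable_llr_of_le_smul (mixture_absolutelyContinuous hν.ac hκ) (by simpa using ht)
    (le_smul_mixture_left ht)

lemma integrable_llr_mixture_right (hν : ν ≪ μ) (hκ : HasFiniteEntropy μ κ) (ht : 0 < t) :
    Integrable (llr (mixture t ν κ) μ) κ :=
  hκ.integrable_llr_of_le_smul (mixture_absolutelyContinuous hν hκ.ac) (by simpa using ht)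
    (le_smul_mixture_right ht)

protected lemma mixture (hν : HasFiniteEntropy μ ν) (hκ : HasFiniteEntropy μ κ)
    (ht : t ∈ Set.Ioo 0 1) :
    HasFiniteEntropy μ (mixture t ν κ) :=
  ⟨mixture_absolutelyContinuous hν.ac hκ.ac,
    ((hν.integrable_llr_mixture_left hκ.ac ht.2).smul_measure ENNReal.ofReal_ne_top).add_measure
      ((integrable_llr_mixture_right hν.ac hκ ht.1).smul_measure ENNReal.ofReal_ne_top)⟩

lemma entropy_mixture_eq (hν : HasFiniteEntropy μ ν) (hκ : HasFiniteEntropy μ κ)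
    (ht : t ∈ Set.Ioo 0 1) :
    entropy μ (mixture t ν κ) = (1 - t) * crossEntropy μ ν (mixture t ν κ) +
      t * crossEntropy μ κ (mixture t ν κ) :=
  crossEntropy_mixture ht (hν.integrable_llr_mixture_left hκ.ac ht.2)
    (integrable_llr_mixture_right hν.ac hκ ht.1)

end HasFiniteEntropy

end Mixture

namespace HasFiniteEntropy

variable {t : ℝ} [SigmaFinite μ] [IsProbabilityMeasure ν] [IsProbabilityMeasure κ]

lemma entropy_le_crossEntropy_mixture_left (hν : HasFiniteEntropy μ ν) (hκ : κ ≪ μ)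
    (ht : t ∈ Set.Ioo 0 1) : entropy μ ν ≤ crossEntropy μ ν (mixture t ν κ) :=
  have := isProbabilityMeasure_mixture (ν := ν) (κ := κ) ht
  hν.entropy_le_crossEntropy (mixture_absolutelyContinuous hν.ac hκ) (by simpa using ht.2)
    (le_smul_mixture_left ht.2)

lemma entropy_le_crossEntropy_mixture_right (hν : ν ≪ μ) (hκ : HasFiniteEntropy μ κ)
    (ht : t ∈ Set.Ioo 0 1) : entropy μ κ ≤ crossEntropy μ κ (mixture t ν κ) :=
  have := isProbabilityMeasure_mixture (ν := ν) (κ := κ) ht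
  hκ.entropy_le_crossEntropy (mixture_absolutelyContinuous hν hκ.ac) (by simpa using ht.1)
    (le_smul_mixture_right ht.1)

lemma le_entropy_mixture (hν : HasFiniteEntropy μ ν) (hκ : HasFiniteEntropy μ κ)
    (ht : t ∈ Set.Ioo 0 1) :
    (1 - t) * entropy μ ν + t * entropy μ κ ≤ entropy μ (mixture t ν κ) := by
  rw [hν.entropy_mixture_eq hκ ht]
  have hleft := hν.entropy_le_crossEntropy_mixture_left hκ.ac ht
  have hright := entropy_le_crossEntropy_mixture_right hν.ac hκ ht
  have := ht.1
  have := sub_pos.2 ht.2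
  gcongr

lemma crossEntropy_mixture_right_le (hν : HasFiniteEntropy μ ν) (hκ : HasFiniteEntropy μ κ)
    (ht : t ∈ Set.Ioo 0 1) (h : entropy μ (mixture t ν κ) ≤ entropy μ ν) :
    crossEntropy μ κ (mixture t ν κ) ≤ entropy μ ν := by
  rw [hν.entropy_mixture_eq hκ ht] at h
  have hleft := mul_le_mul_of_nonneg_left (hν.entropy_le_crossEntropy_mixture_left hκ.ac ht)
    (sub_pos.2 ht.2).le
  exact le_of_mul_le_mul_left (by linarith) ht.1

end HasFiniteEntropy

end Entropy

section TotalVariation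

variable {α β : Type*} [MeasurableSpace α] [MeasurableSpace β] {δ : ℝ}

/-- The total variation distance `sup_B |P B - Q B|` of the finite measures `P` and `Q` is at most
`δ`. -/
def TVClose (δ : ℝ) (P Q : Measure α) : Prop :=
  ∀ B, MeasurableSet B → |P.real B - Q.real B| ≤ δ

namespace TVClose

variable {P Q Q' : Measure α}

lemma nonneg (h : TVClose δ P Q) : 0 ≤ δ := by
  simpa using h ∅ .empty

lemma mono {δ' : ℝ} (h : TVClose δ P Q) (hδ : δ ≤ δ') : TVClose δ' P Q :=
  fun B hB => (h B hB).trans hδ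

protected lemma symm (h : TVClose δ P Q) : TVClose δ Q P :=
  fun B hB => abs_sub_comm (P.real B) _ ▸ h B hB

protected lemma trans {δ' : ℝ} (h : TVClose δ P Q) (h' : TVClose δ' Q Q') :
    TVClose (δ + δ') P Q' :=
  fun B hB => (abs_sub_le _ _ _).trans (add_le_add (h B hB) (h' B hB))

lemma measure_le_add [IsFiniteMeasure P] [IsFiniteMeasure Q] (h : TVClose δ P Q) {B : Set α}
    (hB : MeasurableSet B) : P B ≤ Q B + ENNReal.ofReal δ := by
  rw [← ofReal_measureReal, ← ofReal_measureReal (μ := Q),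
    ← ENNReal.ofReal_add measureReal_nonneg h.nonneg]
  exact ENNReal.ofReal_le_ofReal (by linarith [(abs_le.1 (h B hB)).2])

end TVClose

lemma tvClose_of_forall_measure_le_add {P Q : Measure α} [IsProbabilityMeasure P]
    [IsProbabilityMeasure Q] (hδ : 0 ≤ δ)
    (h : ∀ B, MeasurableSet B → P B ≤ Q B + ENNReal.ofReal δ) : TVClose δ P Q := by
  have hreal : ∀ B, MeasurableSet B → P.real B ≤ Q.real B + δ := fun B hB => by
    rw [← ENNReal.toReal_ofReal hδ, Measure.real, Measure.real,
      ← ENNReal.toReal_add (measure_ne_top Q B) ENNReal.ofReal_ne_top]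
    exact ENNReal.toReal_mono (by finiteness) (h B hB)
  intro B hB
  have hcompl := hreal Bᶜ hB.compl
  rw [probReal_compl_eq_one_sub hB, probReal_compl_eq_one_sub hB] at hcompl
  exact abs_le.2 ⟨by linarith, by linarith [hreal B hB]⟩

lemma TVClose.prod {P₁ Q₁ : Measure α} {P₂ Q₂ : Measure β} [IsProbabilityMeasure P₁]
    [IsProbabilityMeasure Q₁] [IsProbabilityMeasure P₂] [IsProbabilityMeasure Q₂] {δ₁ δ₂ : ℝ}
    (h₁ : TVClose δ₁ P₁ Q₁) (h₂ : TVClose δ₂ P₂ Q₂) :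
    TVClose (δ₁ + δ₂) (P₁.prod P₂) (Q₁.prod Q₂) := by
  have hleft : TVClose δ₁ (P₁.prod P₂) (Q₁.prod P₂) := by
    refine tvClose_of_forall_measure_le_add h₁.nonneg fun B hB => ?_
    rw [Measure.prod_apply_symm hB, Measure.prod_apply_symm hB]
    calc ∫⁻ y, P₁ ((fun x => (x, y)) ⁻¹' B) ∂P₂
        ≤ ∫⁻ y, (Q₁ ((fun x => (x, y)) ⁻¹' B) + ENNReal.ofReal δ₁) ∂P₂ :=
          lintegral_mono fun y => h₁.measure_le_add (measurable_prodMk_right hB)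
      _ = _ := by simp [lintegral_add_right]
  have hright : TVClose δ₂ (Q₁.prod P₂) (Q₁.prod Q₂) := by
    refine tvClose_of_forall_measure_le_add h₂.nonneg fun B hB => ?_
    rw [Measure.prod_apply hB, Measure.prod_apply hB]
    calc ∫⁻ x, P₂ (Prod.mk x ⁻¹' B) ∂Q₁
        ≤ ∫⁻ x, (Q₂ (Prod.mk x ⁻¹' B) + ENNReal.ofReal δ₂) ∂Q₁ :=
          lintegral_mono fun x => h₂.measure_le_add (measurable_prodMk_left hB)
      _ = _ := by simp [lintegral_add_right]
  exact hleft.trans hright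

lemma TVClose.pi {P Q : Measure α} [IsProbabilityMeasure P] [IsProbabilityMeasure Q]
    (h : TVClose δ P Q) (k : ℕ) :
    TVClose (k * δ) (Measure.pi fun _ : Fin k => P) (Measure.pi fun _ : Fin k => Q) := by
  induction k with
  | zero =>
    intro B _
    simp [Measure.real, Measure.pi_of_empty _ (default : Fin 0 → α)]
  | succ k ih =>
    intro B hB
    have hP := (measurePreserving_piFinSuccAbove (fun _ : Fin (k + 1) => P) 0).symm
    have hQ := (measurePreserving_piFinSuccAbove (fun _ : Fin (k + 1) => Q) 0).symm
    rw [← hP.measureReal_preimage hB.nullMeasurableSet,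
      ← hQ.measureReal_preimage hB.nullMeasurableSet]
    exact (h.prod ih _ (hP.measurable hB)).trans_eq (by push_cast; ring)

lemma TVClose.levyProkhorovDist_le [PseudoEMetricSpace α] {P Q : Measure α} [IsFiniteMeasure P]
    [IsFiniteMeasure Q] (h : TVClose δ P Q) : levyProkhorovDist P Q ≤ δ := by
  refine ENNReal.toReal_le_of_le_ofReal h.nonneg (levyProkhorovEDist_le_of_forall P Q _ ?_)
  intro ε B hε hε_top hB
  have hthick {μ ν : Measure α} (hle : μ B ≤ ν B + ENNReal.ofReal δ) :
      μ B ≤ ν (Metric.thickening ε.toReal B) + ε :=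
    hle.trans <| add_le_add (measure_mono <| Metric.self_subset_thickening
      (ENNReal.toReal_pos (pos_of_gt hε).ne' hε_top.ne) B) hε.le
  exact ⟨hthick (h.measure_le_add hB), hthick (h.symm.measure_le_add hB)⟩

end TotalVariation

section ProductMeasure

open ProbabilityTheory

lemma lintegral_pi_prod {n : ℕ} {X : Fin n → Type*} [∀ i, MeasurableSpace (X i)]
    (μ : ∀ i, Measure (X i)) [∀ i, SigmaFinite (μ i)] {f : ∀ i, X i → ℝ≥0∞}
    (hf : ∀ i, Measurable (f i)) :
    ∫⁻ x, ∏ i, f i (x i) ∂Measure.pi μ = ∏ i, ∫⁻ x, f i x ∂μ i := by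
  induction n with
  | zero => simp [lintegral_const]
  | succ n ih =>
    have hsplit := (measurePreserving_piFinSuccAbove μ 0).symm
    rw [← hsplit.lintegral_comp (by fun_prop), Fin.prod_univ_succ,
      ← ih (fun i => μ i.succ) (fun i => hf i.succ),
      ← lintegral_prod_mul (hf 0).aemeasurable (Finset.measurable_fun_prod _ fun i _ =>
        (hf i.succ).comp (measurable_pi_apply i)).aemeasurable]
    refine lintegral_congr fun z => ?_
    rw [Fin.prod_univ_succ]
    rfl

variable {α : Type*} [MeasurableSpace α] {μ κ : Measure α}

lemma pi_eq_withDensity_prod_rnDeriv [SigmaFinite μ] [SigmaFinite κ] (hκ : κ ≪ μ) (n : ℕ) :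
    Measure.pi (fun _ : Fin n => κ) =
      (Measure.pi fun _ : Fin n => μ).withDensity fun x => ∏ i, κ.rnDeriv μ (x i) := by
  refine Measure.pi_eq fun s hs => ?_
  rw [withDensity_apply _ (MeasurableSet.univ_pi hs), Measure.restrict_pi_pi,
    lintegral_pi_prod _ fun _ => Measure.measurable_rnDeriv κ μ]
  exact Finset.prod_congr rfl fun i _ => Measure.setLIntegral_rnDeriv hκ _

lemma pi_absolutelyContinuous [SigmaFinite μ] [SigmaFinite κ] (hκ : κ ≪ μ) (n : ℕ) :
    Measure.pi (fun _ : Fin n => κ) ≪ Measure.pi fun _ : Fin n => μ :=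
  pi_eq_withDensity_prod_rnDeriv hκ n ▸ withDensity_absolutelyContinuous _ _

lemma llr_pi_ae_eq_sum [SigmaFinite μ] [SigmaFinite κ] {n : ℕ} {P : Measure (Fin n → α)}
    (hP : P ≪ Measure.pi fun _ => μ) (hκ : κ ≪ μ) (hmarg : ∀ i, P.map (fun x => x i) ≪ κ) :
    llr (Measure.pi fun _ => κ) (Measure.pi fun _ => μ) =ᵐ[P] fun x => ∑ i, llr κ μ (x i) := by
  have hκ_ne : ∀ᵐ y ∂κ, κ.rnDeriv μ y ≠ 0 ∧ κ.rnDeriv μ y ≠ ∞ := by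
    filter_upwards [Measure.rnDeriv_pos hκ, hκ.ae_le (Measure.rnDeriv_lt_top κ μ)] with y h0 h1
    exact ⟨h0.ne', h1.ne⟩
  have hne : ∀ᵐ x ∂P, ∀ i, κ.rnDeriv μ (x i) ≠ 0 ∧ κ.rnDeriv μ (x i) ≠ ∞ :=
    ae_all_iff.2 fun i => (Measure.tendsto_ae_map (measurable_pi_apply i).aemeasurable).eventually
      ((hmarg i).ae_le hκ_ne)
  have hdens := hP.ae_le (Measure.rnDeriv_withDensity (Measure.pi fun _ : Fin n => μ)
    (f := fun x => ∏ i, κ.rnDeriv μ (x i)) (by fun_prop))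
  rw [← pi_eq_withDensity_prod_rnDeriv hκ] at hdens
  filter_upwards [hdens, hne] with x hx hx0
  simp only [llr, hx, ENNReal.toReal_prod]
  exact log_prod fun i _ => (ENNReal.toReal_pos (hx0 i).1 (hx0 i).2).ne'

lemma absolutelyContinuous_pi_of_map_eval [SigmaFinite μ] [SigmaFinite κ] {n : ℕ}
    {P : Measure (Fin n → α)} (hP : P ≪ Measure.pi fun _ => μ) (hκ : κ ≪ μ)
    (hmarg : ∀ i, P.map (fun x => x i) ≪ κ) : P ≪ Measure.pi fun _ => κ := by
  refine Measure.AbsolutelyContinuous.mk fun s hs hs0 => ?_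
  rw [pi_eq_withDensity_prod_rnDeriv hκ, withDensity_apply _ hs,
    lintegral_eq_zero_iff (by fun_prop)] at hs0
  have hpos : ∀ᵐ x ∂P, ∀ i, 0 < κ.rnDeriv μ (x i) :=
    ae_all_iff.2 fun i => (Measure.tendsto_ae_map (measurable_pi_apply i).aemeasurable).eventually
      ((hmarg i).ae_le (Measure.rnDeriv_pos hκ))
  have hnot : ∀ᵐ x ∂P, x ∉ s := by
    filter_upwards [hP.ae_le ((ae_restrict_iff' hs).1 hs0), hpos] with x hx hx0 hxs
    exact Finset.prod_ne_zero_iff.2 (fun i _ => (hx0 i).ne') (hx hxs)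
  simpa [ae_iff] using hnot

lemma integrable_comp_eval {n : ℕ} {P : Measure (Fin n → α)} {g : Measure α} {i : Fin n}
    (hmarg : P.map (fun x => x i) = g) {f : α → ℝ} (hf : Integrable f g) :
    Integrable (fun x => f (x i)) P :=
  (hmarg ▸ hf).comp_measurable (measurable_pi_apply i)

section

variable [SigmaFinite μ] [SigmaFinite κ] {n : ℕ} {P : Measure (Fin n → α)} {g : Measure α}

lemma integrable_llr_pi (hP : P ≪ Measure.pi fun _ => μ) (hκ : κ ≪ μ)
    (hmarg : ∀ i, P.map (fun x => x i) = g) (hg : g ≪ κ) (hint : Integrable (llr κ μ) g) :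
    Integrable (llr (Measure.pi fun _ => κ) (Measure.pi fun _ => μ)) P :=
  (integrable_finsetSum _ fun i _ => integrable_comp_eval (hmarg i) hint).congr
    (llr_pi_ae_eq_sum hP hκ fun i => hmarg i ▸ hg).symm

lemma crossEntropy_pi (hP : P ≪ Measure.pi fun _ => μ) (hκ : κ ≪ μ)
    (hmarg : ∀ i, P.map (fun x => x i) = g) (hg : g ≪ κ) (hint : Integrable (llr κ μ) g) :
    crossEntropy (Measure.pi fun _ => μ) P (Measure.pi fun _ => κ) = n * crossEntropy μ g κ := by
  have hcoord : ∀ i, ∫ x, llr κ μ (x i) ∂P = ∫ y, llr κ μ y ∂g := fun i => by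
    rw [← hmarg i, integral_map (measurable_pi_apply i).aemeasurable (by fun_prop)]
  rw [crossEntropy, crossEntropy, integral_congr_ae (llr_pi_ae_eq_sum hP hκ fun i => hmarg i ▸ hg),
    integral_finsetSum _ fun i _ => integrable_comp_eval (hmarg i) hint]
  simp [hcoord]

lemma integrable_llr_pi_right [IsFiniteMeasure P] (hP : HasFiniteEntropy (Measure.pi fun _ => μ) P)
    (hκ : κ ≪ μ) (hmarg : ∀ i, P.map (fun x => x i) = g) (hg : g ≪ κ)
    (hint : Integrable (llr κ μ) g) : Integrable (llr P (Measure.pi fun _ => κ)) P := by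
  refine (hP.integrable_llr.sub (integrable_llr_pi hP.ac hκ hmarg hg hint)).congr ?_
  filter_upwards [llr_ae_eq_llr_add_llr
    (absolutelyContinuous_pi_of_map_eval hP.ac hκ fun i => hmarg i ▸ hg)
    (pi_absolutelyContinuous hκ n)] with x hx
  simp [hx]

lemma integral_llr_pi_right [IsFiniteMeasure P] (hP : HasFiniteEntropy (Measure.pi fun _ => μ) P)
    (hκ : κ ≪ μ) (hmarg : ∀ i, P.map (fun x => x i) = g) (hg : g ≪ κ)
    (hint : Integrable (llr κ μ) g) : ∫ x, llr P (Measure.pi fun _ => κ) x ∂P =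
      n * crossEntropy μ g κ - entropy (Measure.pi fun _ => μ) P := by
  rw [integral_llr_eq_crossEntropy_sub_entropy
    (absolutelyContinuous_pi_of_map_eval hP.ac hκ fun i => hmarg i ▸ hg)
    (pi_absolutelyContinuous hκ n) hP.integrable_llr (integrable_llr_pi hP.ac hκ hmarg hg hint),
    crossEntropy_pi hP.ac hκ hmarg hg hint]

end

end ProductMeasure

section Pinsker

open ProbabilityTheory

lemma indicator_one_mem_Icc {β : Type*} (B : Set β) (y : β) :
    B.indicator (1 : β → ℝ) y ∈ Set.Icc (0 : ℝ) 1 :=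
  ⟨Set.indicator_nonneg (fun _ _ => zero_le_one) y,
    Set.indicator_le' (fun _ _ => le_rfl) (fun _ _ => zero_le_one) y⟩

variable {Ω β : Type*} [MeasurableSpace Ω] [MeasurableSpace β] {P Q : Measure Ω}

lemma integral_indicator_one_comp {T : Ω → β} (hT : Measurable T) {B : Set β}
    (hB : MeasurableSet B) : ∫ x, B.indicator (1 : β → ℝ) (T x) ∂P = (P.map T).real B := by
  rw [← integral_map hT.aemeasurable (measurable_one.indicator hB).aestronglyMeasurable,
    integral_indicator_one hB]

variable [IsProbabilityMeasure P] [IsProbabilityMeasure Q]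

/-- The easy half of the Donsker–Varadhan variational formula. -/
lemma integral_sub_log_integral_exp_le (hPQ : P ≪ Q) (hint : Integrable (llr P Q) P) {f : Ω → ℝ}
    (hf : Integrable f P) (hexp : Integrable (fun x => exp (f x)) Q) :
    ∫ x, f x ∂P - log (∫ x, exp (f x) ∂Q) ≤ ∫ x, llr P Q x ∂P := by
  have := isProbabilityMeasure_tilted hexp
  have htilted := integral_llr_nonneg (hPQ.trans (absolutelyContinuous_tilted hexp))
    (integrable_llr_tilted_right hPQ hf hint hexp)
  rw [integral_llr_tilted_right hPQ hf hexp hint] at htilted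
  linarith

variable {ι : Type*} [Fintype ι] {T : ι → Ω → β} {G ρ : Measure β} {B : Set β}

lemma hasSubgaussianMGF_sum_indicator_sub (hT : ∀ j, Measurable (T j)) (hindep : iIndepFun T Q)
    (hρ : ∀ j, Q.map (T j) = ρ) (hB : MeasurableSet B) :
    HasSubgaussianMGF (fun x => ∑ j, (B.indicator (1 : β → ℝ) (T j x) - ρ.real B))
      (∑ _ : ι, (‖(1 : ℝ) - 0‖₊ / 2) ^ 2) Q := by
  have hind : Measurable (B.indicator (1 : β → ℝ)) := measurable_one.indicator hB
  refine .sum_of_iIndepFun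
    (hindep.comp (fun _ y => B.indicator (1 : β → ℝ) y - ρ.real B) fun _ => hind.sub_const _)
    fun j _ => ?_
  have hHoeffding := hasSubgaussianMGF_of_mem_Icc (μ := Q)
    (X := fun x => B.indicator (1 : β → ℝ) (T j x)) (hind.comp (hT j)).aemeasurable
    (ae_of_all _ fun x => indicator_one_mem_Icc B (T j x))
  rwa [integral_indicator_one_comp (hT j) hB, hρ j] at hHoeffding

/-- Pinsker's inequality for independent samples, obtained by testing the Donsker–Varadhan formula
on the centred empirical frequency of `B`, whose exponential moments Hoeffding's lemma controls. -/
lemma two_mul_card_mul_sq_le_integral_llr (hPQ : P ≪ Q) (hint : Integrable (llr P Q) P)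
    (hT : ∀ j, Measurable (T j)) (hindep : iIndepFun T Q) (hG : ∀ j, P.map (T j) = G)
    (hρ : ∀ j, Q.map (T j) = ρ) (hB : MeasurableSet B) :
    2 * Fintype.card ι * (G.real B - ρ.real B) ^ 2 ≤ ∫ x, llr P Q x ∂P := by
  have hsubG := hasSubgaussianMGF_sum_indicator_sub hT hindep hρ hB
  have hind : ∀ j, Integrable (fun x => B.indicator (1 : β → ℝ) (T j x)) P := fun j =>
    .of_mem_Icc 0 1 ((measurable_one.indicator hB).comp (hT j)).aemeasurable
      (ae_of_all _ fun x => indicator_one_mem_Icc B (T j x))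
  have hterm : ∀ j, Integrable (fun x => B.indicator (1 : β → ℝ) (T j x) - ρ.real B) P :=
    fun j => (hind j).sub (integrable_const _)
  have hmean : ∀ j, ∫ x, (B.indicator (1 : β → ℝ) (T j x) - ρ.real B) ∂P =
      G.real B - ρ.real B := fun j => by
    rw [integral_sub (hind j) (integrable_const _), integral_indicator_one_comp (hT j) hB, hG j,
      integral_const, probReal_univ, one_smul]
  -- The slope `4 * (G.real B - ρ.real B)` maximizes `s * (G.real B - ρ.real B) - s ^ 2 / 8`.
  have hDV := integral_sub_log_integral_exp_le hPQ hint
    ((integrable_finsetSum Finset.univ fun j _ => hterm j).const_mul (4 * (G.real B - ρ.real B)))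
    (hsubG.integrable_exp_mul _)
  have hcgf := hsubG.cgf_le (4 * (G.real B - ρ.real B))
  rw [cgf, mgf] at hcgf
  rw [integral_const_mul, integral_finsetSum _ fun j _ => hterm j] at hDV
  simp only [hmean, sub_zero, nnnorm_one, Finset.sum_const, Finset.card_univ, nsmul_eq_mul,
    NNReal.coe_mul, NNReal.coe_natCast, NNReal.coe_pow, NNReal.coe_div, NNReal.coe_one,
    NNReal.coe_ofNat] at hcgf hDV
  linarith

lemma tvClose_of_integral_llr_le [Nonempty ι] (hPQ : P ≪ Q) (hint : Integrable (llr P Q) P)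
    (hT : ∀ j, Measurable (T j)) (hindep : iIndepFun T Q) (hG : ∀ j, P.map (T j) = G)
    (hρ : ∀ j, Q.map (T j) = ρ) {η : ℝ} (hkl : ∫ x, llr P Q x ∂P ≤ 2 * Fintype.card ι * η) :
    TVClose √η G ρ := fun _ hB => by
  refine abs_le_sqrt (le_of_mul_le_mul_left
    ((two_mul_card_mul_sq_le_integral_llr hPQ hint hT hindep hG hρ hB).trans hkl) ?_)
  exact mul_pos two_pos (Nat.cast_pos.2 Fintype.card_pos)

section Blocks

variable {α : Type*} [MeasurableSpace α] {κ : Measure α} [IsProbabilityMeasure κ]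
  {ι γ γ' : Type*} [Fintype γ]

lemma measurePreserving_pi_comp [Fintype ι] (e : ι ↪ γ) :
    MeasurePreserving (fun (x : γ → α) i => x (e i)) (Measure.pi fun _ => κ)
      (Measure.pi fun _ => κ) := by
  refine ⟨by fun_prop, ?_⟩
  rw [← Measure.infinitePi_eq_pi, ← Measure.infinitePi_eq_pi]
  exact Measure.map_infinitePi_infinitePi_of_inj (P := fun _ : γ => κ) e.injective

lemma iIndepFun_pi_blocks [Finite ι] [Finite γ'] (e : ι × γ' ↪ γ) :
    iIndepFun (fun j (x : γ → α) i => x (e (j, i))) (Measure.pi fun _ => κ) := by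
  cases nonempty_fintype ι
  cases nonempty_fintype γ'
  have hblock : ∀ j, (Measure.pi fun _ : γ => κ).map (fun x i => x (e (j, i))) =
      Measure.infinitePi fun _ : γ' => κ := fun j => by
    rw [Measure.infinitePi_eq_pi]
    exact (measurePreserving_pi_comp
      ⟨fun i => e (j, i), fun i i' h => by simpa using e.injective h⟩).map_eq
  rw [iIndepFun_iff_map_fun_eq_pi_map fun j => (by fun_prop : Measurable _).aemeasurable]
  simp only [hblock]
  rw [← Measure.infinitePi_eq_pi (μ := fun _ : ι => Measure.infinitePi fun _ : γ' => κ),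
    ← Measure.infinitePi_map_curry (fun _ : ι => fun _ : γ' => κ), Measure.infinitePi_eq_pi,
    ← (measurePreserving_pi_comp e).map_eq,
    Measure.map_map (by fun_prop) (by fun_prop)]
  rfl

end Blocks

end Pinsker

section UniformLaw

open ProbabilityTheory

section

variable {α : Type*} [MeasurableSpace α] {μ : Measure α} {K : Set α}

lemma llr_cond_ae_eq [SigmaFinite μ] (hK : MeasurableSet K) (h0 : μ K ≠ 0) :
    llr (cond μ K) μ =ᵐ[cond μ K] fun _ => -log (μ.real K) := by
  have hac : cond μ K ≪ μ := cond_absolutelyContinuous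
  filter_upwards [hac.ae_le (Measure.rnDeriv_smul_left_of_ne_top' (μ.restrict K) μ
    (ENNReal.inv_ne_top.2 h0)), hac.ae_le (Measure.rnDeriv_restrict_self μ hK), ae_cond_mem hK]
    with x hsmul hrestrict hx
  rw [llr, ProbabilityTheory.cond, hsmul, Pi.smul_apply, hrestrict, Set.indicator_of_mem hx]
  simp [Measure.real]

lemma hasFiniteEntropy_cond [SigmaFinite μ] (hK : MeasurableSet K) (h0 : μ K ≠ 0) :
    HasFiniteEntropy μ (cond μ K) :=
  ⟨cond_absolutelyContinuous, (integrable_const _).congr (llr_cond_ae_eq hK h0).symm⟩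

lemma entropy_cond [SigmaFinite μ] (hK : MeasurableSet K) (h0 : μ K ≠ 0) (h1 : μ K ≠ ∞) :
    entropy μ (cond μ K) = log (μ.real K) := by
  have := cond_isProbabilityMeasure_of_finite h0 h1
  rw [entropy, crossEntropy, integral_congr_ae (llr_cond_ae_eq hK h0)]
  simp

end

lemma hasFiniteEntropy_map_eval_cond {α ι : Type*} [MeasurableSpace α] [Fintype ι] {μ : Measure α}
    [SigmaFinite μ] {K : Set (ι → α)} (h0 : Measure.pi (fun _ => μ) K ≠ 0) {S : Set α}
    (hSm : MeasurableSet S) (hS : μ S ≠ ∞) (hKS : K ⊆ Set.univ.pi fun _ => S) (i : ι) :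
    HasFiniteEntropy μ ((cond (Measure.pi fun _ => μ) K).map fun x => x i) := by
  have : IsFiniteMeasure (μ.restrict S) := ⟨by simpa using hS.lt_top⟩
  refine .of_le_smul_restrict hSm hS (C := (Measure.pi (fun _ => μ) K)⁻¹ *
    ∏ _j ∈ Finset.univ.erase i, μ S)
    (ENNReal.mul_ne_top (ENNReal.inv_ne_top.2 h0) (ENNReal.prod_ne_top fun _ _ => hS)) ?_
  calc (cond (Measure.pi fun _ => μ) K).map (fun x => x i)
      ≤ ((Measure.pi (fun _ => μ) K)⁻¹ • (Measure.pi fun _ => μ).restrict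
          (Set.univ.pi fun _ => S)).map fun x => x i :=
        Measure.map_mono (by unfold ProbabilityTheory.cond; gcongr) (measurable_pi_apply i)
    _ = _ := by
        have heval := Measure.pi_map_eval (fun _ : ι => μ.restrict S) i
        rw [Measure.restrict_pi_pi, Measure.map_smul, mul_smul]
        simpa [Function.eval] using congrArg (_ • ·) heval

end UniformLaw

section Exchangeable

open ProbabilityTheory

variable {α ι : Type*} [MeasurableSpace α]

/-- A law on `ι → α` is exchangeable if permuting the coordinates leaves it unchanged. -/
def Exchangeable (P : Measure (ι → α)) : Prop :=
  ∀ σ : Equiv.Perm ι, MeasurePreserving (fun x i => x (σ i)) P P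

namespace Exchangeable

variable {P : Measure (ι → α)}

lemma map_comp_embedding_eq (hP : Exchangeable P) {k : ℕ} (e e' : Fin k ↪ ι) :
    P.map (fun x i => x (e i)) = P.map fun x i => x (e' i) := by
  have := Equiv.Perm.isMultiplyPretransitive ι k
  obtain ⟨σ, rfl⟩ := MulAction.exists_smul_eq (Equiv.Perm ι) e e'
  conv_lhs => rw [← (hP σ).map_eq]
  rw [Measure.map_map (by fun_prop) (by fun_prop)]
  rfl

lemma map_eval_eq (hP : Exchangeable P) (i j : ι) :
    P.map (fun x => x i) = P.map fun x => x j := by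
  conv_lhs => rw [← (hP (Equiv.swap i j)).map_eq]
  rw [Measure.map_map (by fun_prop) (by fun_prop)]
  simp [Function.comp_def]

protected lemma cond (hP : Exchangeable P) {K : Set (ι → α)} (hK : MeasurableSet K)
    (hsymm : ∀ (σ : Equiv.Perm ι) x, (fun i => x (σ i)) ∈ K ↔ x ∈ K) :
    Exchangeable (cond P K) := fun σ => by
  have hpre : (fun (x : ι → α) i => x (σ i)) ⁻¹' K = K := Set.ext (hsymm σ)
  exact (hpre ▸ (hP σ).restrict_preimage hK).smul_measure _

end Exchangeable

lemma exchangeable_pi [Fintype ι] {μ : Measure α} [SigmaFinite μ] :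
    Exchangeable (Measure.pi fun _ : ι => μ) := fun σ =>
  (measurePreserving_piCongrLeft (fun _ : ι => μ) σ).symm

section Pinsker

variable {n : ℕ} {P : Measure (Fin n → α)} {m : Measure α} [IsProbabilityMeasure P]
  [IsProbabilityMeasure m] {η : ℝ}

lemma Exchangeable.tvClose_map_eval (hP : Exchangeable P) (hac : P ≪ Measure.pi fun _ => m)
    (hint : Integrable (llr P (Measure.pi fun _ => m)) P)
    (hkl : ∫ x, llr P (Measure.pi fun _ => m) x ∂P ≤ n * η) (i : Fin n) :
    TVClose √(η / 2) (P.map fun x => x i) m := by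
  have : Nonempty (Fin n) := ⟨i⟩
  refine tvClose_of_integral_llr_le hac hint (T := fun j x => x j) measurable_pi_apply
    (iIndepFun_pi (X := fun _ => id) fun _ => aemeasurable_id) (fun j => hP.map_eval_eq j i)
    (fun j => (measurePreserving_eval (fun _ => m) j).map_eq) (hkl.trans_eq ?_)
  rw [Fintype.card_fin]
  ring

/-- Cut the coordinates into `n / (k + 1)` disjoint blocks of length `k`: they are independent under
`m^{⊗n}`, and share the `k`-dimensional marginal of `P` by exchangeability. -/
lemma Exchangeable.tvClose_map_embedding (hP : Exchangeable P) (hac : P ≪ Measure.pi fun _ => m)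
    (hint : Integrable (llr P (Measure.pi fun _ => m)) P)
    (hkl : ∫ x, llr P (Measure.pi fun _ => m) x ∂P ≤ n * η) (hη : 0 ≤ η) {k : ℕ} (hk : k < n)
    (e : Fin k ↪ Fin n) :
    TVClose √((k + 1) * η) (P.map fun x i => x (e i)) (Measure.pi fun _ => m) := by
  set M := n / (k + 1)
  have hM : 0 < M := Nat.div_pos hk k.succ_pos
  have hMn : M * (k + 1) ≤ n := Nat.div_mul_le_self n (k + 1)
  have hnM : n ≤ 2 * M * (k + 1) := by
    have hn : n < M * (k + 1) + (k + 1) := Nat.lt_div_mul_add k.succ_pos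
    have hblock : 1 * (k + 1) ≤ M * (k + 1) := Nat.mul_le_mul_right _ hM
    linarith
  have : Nonempty (Fin M) := ⟨⟨0, hM⟩⟩
  let blocks : Fin M × Fin k ↪ Fin n := finProdFinEquiv.toEmbedding.trans
    (Fin.castLEEmb ((Nat.mul_le_mul_left M k.le_succ).trans hMn))
  let block (j : Fin M) : Fin k ↪ Fin n :=
    ⟨fun i => blocks (j, i), fun i i' h => by simpa using blocks.injective h⟩
  refine tvClose_of_integral_llr_le hac hint (T := fun j x i => x (block j i))
    (fun j => by fun_prop) (iIndepFun_pi_blocks blocks) (fun j => hP.map_comp_embedding_eq _ e)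
    (fun j => (measurePreserving_pi_comp (block j)).map_eq) (hkl.trans ?_)
  rw [Fintype.card_fin, ← mul_assoc]
  gcongr
  exact_mod_cast hnM

end Pinsker

end Exchangeable

section TypicalSets

open ProbabilityTheory

lemma measure_le_exp_mul_of_llr_le {Ω : Type*} [MeasurableSpace Ω] {Q ν : Measure Ω}
    [SigmaFinite Q] [SigmaFinite ν] (hQ : Q ≪ ν) {a : ℝ} {A : Set Ω}
    (hA : ∀ᵐ x ∂Q, x ∈ A → llr Q ν x ≤ a) : Q A ≤ ENNReal.ofReal (exp a) * ν A := by
  calc Q A ≤ Q (A ∩ {x | llr Q ν x ≤ a}) :=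
        measure_mono_ae (hA.mono fun x hx hxA => ⟨hxA, hx hxA⟩)
    _ = ∫⁻ x in A ∩ {x | llr Q ν x ≤ a}, Q.rnDeriv ν x ∂ν :=
        (Measure.setLIntegral_rnDeriv hQ _).symm
    _ ≤ ∫⁻ _ in A ∩ {x | llr Q ν x ≤ a}, ENNReal.ofReal (exp a) ∂ν := by
        refine setLIntegral_mono_ae aemeasurable_const ?_
        filter_upwards [Measure.rnDeriv_lt_top Q ν] with x hlt hx
        rw [← ENNReal.ofReal_toReal hlt.ne]
        exact ENNReal.ofReal_le_ofReal ((le_exp_log _).trans (exp_le_exp.2 hx.2))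
    _ ≤ ENNReal.ofReal (exp a) * ν A := by
        rw [setLIntegral_const]
        gcongr
        exact Set.inter_subset_left

lemma log_sub_le_log_measureReal {Ω : Type*} [MeasurableSpace Ω] {Q ν : Measure Ω}
    [IsFiniteMeasure Q] [SigmaFinite ν] (hQ : Q ≪ ν) {a c : ℝ} {A : Set Ω} (hc : 0 < c)
    (hcA : c ≤ Q.real A) (hA : ∀ᵐ x ∂Q, x ∈ A → llr Q ν x ≤ a) (hfin : ν A ≠ ∞) :
    log c - a ≤ log (ν.real A) := by
  have hle : c ≤ exp a * ν.real A := by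
    refine hcA.trans ?_
    simpa [Measure.real, ENNReal.toReal_ofReal (exp_pos a).le] using ENNReal.toReal_mono
      (ENNReal.mul_ne_top ENNReal.ofReal_ne_top hfin) (measure_le_exp_mul_of_llr_le hQ hA)
  have hpos : 0 < ν.real A := pos_of_mul_pos_right (hc.trans_le hle) (exp_pos a).le
  have hlog := log_le_log hc hle
  rw [log_mul (exp_pos a).ne' hpos.ne', log_exp] at hlog
  linarith

variable {α : Type*} [MeasurableSpace α] {μ p : Measure α} [IsProbabilityMeasure p]

lemma ae_tendsto_average {f : α → ℝ} (hf : Measurable f) (hint : Integrable f p) :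
    ∀ᵐ ω ∂Measure.infinitePi fun _ : ℕ => p,
      Tendsto (fun n : ℕ => (∑ i : Fin n, f (ω i)) / n) atTop (𝓝 (∫ x, f x ∂p)) := by
  have hmp := measurePreserving_eval_infinitePi fun _ : ℕ => p
  have hslln := strong_law_ae_real (μ := Measure.infinitePi fun _ : ℕ => p)
    (fun i ω => f (ω i)) ((hmp 0).integrable_comp_of_integrable hint)
    (fun i j hij => (iIndepFun_infinitePi (P := fun _ : ℕ => p)
      (X := fun _ => f) fun _ => hf).indepFun hij)
    (fun i => .comp ⟨(measurable_pi_apply i).aemeasurable, (measurable_pi_apply 0).aemeasurable,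
      (hmp i).map_eq.trans (hmp 0).map_eq.symm⟩ hf)
  filter_upwards [hslln] with ω hω
  rw [← (hmp 0).map_eq, integral_map (measurable_pi_apply 0).aemeasurable hf.aestronglyMeasurable]
  simpa only [Finset.sum_range] using hω

lemma eventually_le_pi_of_ae_eventually_mem {A : ∀ n, Set (Fin n → α)}
    (hA : ∀ n, MeasurableSet (A n))
    (h : ∀ᵐ ω ∂Measure.infinitePi fun _ : ℕ => p, ∀ᶠ n in atTop, (fun i : Fin n => ω i) ∈ A n)
    {a : ℝ≥0∞} (ha : a < 1) : ∀ᶠ n in atTop, a ≤ Measure.pi (fun _ : Fin n => p) (A n) := by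
  have hproj (n : ℕ) : MeasurePreserving (fun (ω : ℕ → α) (i : Fin n) => ω i)
      (Measure.infinitePi fun _ => p) (Measure.pi fun _ => p) := by
    refine ⟨by fun_prop, ?_⟩
    rw [Measure.map_infinitePi_infinitePi_of_inj (f := fun i : Fin n => (i : ℕ))
      Fin.val_injective, Measure.infinitePi_eq_pi]
  have htendsto := tendsto_measure_of_ae_tendsto_indicator_of_isFiniteMeasure atTop
    (μ := Measure.infinitePi fun _ : ℕ => p)
    (As := fun n => (fun (ω : ℕ → α) (i : Fin n) => ω i) ⁻¹' A n) MeasurableSet.univ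
    (fun n => (hproj n).measurable (hA n))
    (h.mono fun ω hω => hω.mono fun n hn => by simpa using hn)
  rw [measure_univ] at htendsto
  filter_upwards [htendsto.eventually_const_le ha] with n hn
  rwa [(hproj n).measure_preimage (hA n).nullMeasurableSet] at hn

lemma llr_pi_self_ae_eq_sum [SigmaFinite μ] (hp : p ≪ μ) (n : ℕ) :
    llr (Measure.pi fun _ => p) (Measure.pi fun _ => μ) =ᵐ[Measure.pi fun _ : Fin n => p]
      fun x => ∑ i, llr p μ (x i) :=
  llr_pi_ae_eq_sum (pi_absolutelyContinuous hp n) hp fun i =>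
    (measurePreserving_eval (fun _ => p) i).map_eq.absolutelyContinuous

/-- The lower bound of the asymptotic equipartition property: sets which eventually contain the
samples of `p` have volume at least `exp (n (H(p) - γ))`. -/
lemma eventually_le_log_pi_of_ae_eventually_mem [SigmaFinite μ] (hp : HasFiniteEntropy μ p)
    {K : ∀ n, Set (Fin n → α)} (hK : ∀ n, MeasurableSet (K n))
    (hfin : ∀ n, Measure.pi (fun _ => μ) (K n) ≠ ∞)
    (hmem : ∀ᵐ ω ∂Measure.infinitePi fun _ : ℕ => p, ∀ᶠ n in atTop, (fun i : Fin n => ω i) ∈ K n)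
    {γ : ℝ} (hγ : 0 < γ) :
    ∀ᶠ n in atTop, Measure.pi (fun _ => μ) (K n) ≠ 0 ∧
      n * (entropy μ p - γ) ≤ log ((Measure.pi fun _ => μ).real (K n)) := by
  set A : ∀ n, Set (Fin n → α) := fun n =>
    K n ∩ {x | ∑ i, llr p μ (x i) ≤ n * -(entropy μ p - γ / 2)}
  have hA (n : ℕ) : MeasurableSet (A n) :=
    (hK n).inter (measurableSet_le (by fun_prop) measurable_const)
  have hA_mem : ∀ᵐ ω ∂Measure.infinitePi fun _ : ℕ => p,
      ∀ᶠ n in atTop, (fun i : Fin n => ω i) ∈ A n := by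
    filter_upwards [hmem, ae_tendsto_average (measurable_llr p μ) hp.integrable_llr] with ω hω havg
    have hlt : ∫ x, llr p μ x ∂p < -(entropy μ p - γ / 2) := by
      rw [entropy, crossEntropy]
      linarith
    filter_upwards [hω, havg.eventually_lt_const hlt, eventually_gt_atTop 0] with n hn hlt hn0
    exact ⟨hn, ((div_lt_iff₀' (Nat.cast_pos.2 hn0)).1 hlt).le⟩
  filter_upwards [eventually_le_pi_of_ae_eventually_mem hA hA_mem (ENNReal.inv_lt_one.2 one_lt_two),
    eventually_ge_atTop ⌈Real.log 2 / (γ / 2)⌉₊] with n hhalf hn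
  have hac := pi_absolutelyContinuous hp.ac n
  have hAK : A n ⊆ K n := Set.inter_subset_left
  have hA0 : Measure.pi (fun _ => μ) (A n) ≠ 0 := fun h => by simp [hac h] at hhalf
  have hlog_A := log_sub_le_log_measureReal hac (a := n * -(entropy μ p - γ / 2))
    (inv_pos.2 two_pos) (by simpa [Measure.real] using ENNReal.toReal_mono (by finiteness) hhalf)
    ((llr_pi_self_ae_eq_sum hp.ac n).mono fun x hx hxA => hx.trans_le hxA.2)
    (measure_ne_top_of_subset hAK (hfin n))
  have hlog_K : log ((Measure.pi fun _ => μ).real (A n)) ≤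
      log ((Measure.pi fun _ => μ).real (K n)) :=
    log_le_log (ENNReal.toReal_pos hA0 (measure_ne_top_of_subset hAK (hfin n)))
      (measureReal_mono hAK (hfin n))
  have hlog_two : Real.log 2 ≤ n * (γ / 2) := (div_le_iff₀ (by positivity)).1 (Nat.ceil_le.1 hn)
  refine ⟨fun h => hA0 (measure_mono_null hAK h), ?_⟩
  rw [Real.log_inv] at hlog_A
  linarith

end TypicalSets

section NearMaximal

variable {α : Type*} [MeasurableSpace α] {μ p g u : Measure α} [SigmaFinite μ]
  [IsProbabilityMeasure p] [IsProbabilityMeasure g] [IsProbabilityMeasure u] {t : ℝ}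

lemma tvClose_mixture_of_tvClose (ht : t ∈ Set.Ioo 0 1) {τ : ℝ}
    (h : TVClose τ g (mixture (1 / 2) p (mixture t g u))) :
    TVClose (τ + t) (mixture (1 / 2) p (mixture t g u)) p := fun B hB => by
  have hhalf : (1 / 2 : ℝ) ∈ Set.Ioo 0 1 := by norm_num
  have hτ := h B hB
  have hgu : |g.real B - u.real B| ≤ 1 :=
    abs_sub_le_of_nonneg_of_le measureReal_nonneg measureReal_le_one measureReal_nonneg
      measureReal_le_one
  rw [mixture_real hhalf, mixture_real ht] at hτ ⊢
  rw [abs_le] at hτ hgu ⊢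
  have := ht.1
  constructor <;> nlinarith

/-- The mixture is compared with `p` through `g` only: `u` enters to make the mixture admissible in
the variational problem solved by `p`, at the price of the entropy gap. -/
lemma crossEntropy_le_of_entropy_mixture_le (hp : HasFiniteEntropy μ p)
    (hg : HasFiniteEntropy μ g) (hu : HasFiniteEntropy μ u) (ht : t ∈ Set.Ioc 0 (1 / 2))
    (hup : entropy μ u ≤ entropy μ p)
    (hle : entropy μ (mixture (1 / 2) p (mixture t g u)) ≤ entropy μ p) :
    crossEntropy μ g (mixture (1 / 2) p (mixture t g u)) ≤
      entropy μ p + 2 * t * (entropy μ p - entropy μ u) := by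
  have hhalf : (1 / 2 : ℝ) ∈ Set.Ioo 0 1 := by norm_num
  have ht01 : t ∈ Set.Ioo 0 1 := ⟨ht.1, ht.2.trans_lt hhalf.2⟩
  have := isProbabilityMeasure_mixture (ν := g) (κ := u) ht01
  set q := mixture t g u
  set r := mixture (1 / 2) p q
  have : IsProbabilityMeasure r := isProbabilityMeasure_mixture hhalf
  have hq : HasFiniteEntropy μ q := hg.mixture hu ht01
  have hr : r ≪ μ := mixture_absolutelyContinuous hp.ac hq.ac
  obtain ⟨C, hC, hgC⟩ : ∃ C ≠ ∞, g ≤ C • r := exists_le_smul_mixture_mixture_left hhalf.1 ht01.2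
  obtain ⟨D, hD, huD⟩ : ∃ D ≠ ∞, u ≤ D • r := exists_le_smul_mixture_mixture_right hhalf.1 ht01.1
  have hqr : crossEntropy μ q r ≤ entropy μ p := hp.crossEntropy_mixture_right_le hq hhalf hle
  have hur : entropy μ u ≤ crossEntropy μ u r := hu.entropy_le_crossEntropy hr hD huD
  rw [crossEntropy_mixture ht01 (hg.integrable_llr_of_le_smul hr hC hgC)
    (hu.integrable_llr_of_le_smul hr hD huD)] at hqr
  have hscaled : (1 - t) * crossEntropy μ g r ≤
      (1 - t) * (entropy μ p + 2 * t * (entropy μ p - entropy μ u)) := by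
    have hslack : 0 ≤ t * ((1 - 2 * t) * (entropy μ p - entropy μ u)) :=
      mul_nonneg ht.1.le (mul_nonneg (by linarith [ht.2]) (sub_nonneg.2 hup))
    have := mul_le_mul_of_nonneg_left hur ht.1.le
    linarith
  exact le_of_mul_le_mul_left hscaled (sub_pos.2 ht01.2)

theorem Exchangeable.tvClose_pi_of_le_entropy {n : ℕ} {P : Measure (Fin n → α)}
    [IsProbabilityMeasure P] (hexch : Exchangeable P)
    (hP : HasFiniteEntropy (Measure.pi fun _ => μ) P)
    (hmarg : ∀ i, P.map (fun x => x i) = g) (hp : HasFiniteEntropy μ p)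
    (hg : HasFiniteEntropy μ g) (hu : HasFiniteEntropy μ u) (ht : t ∈ Set.Ioc 0 (1 / 2))
    (hup : entropy μ u ≤ entropy μ p)
    (hle : entropy μ (mixture (1 / 2) p (mixture t g u)) ≤ entropy μ p) {γ η : ℝ}
    (hent : n * (entropy μ p - γ) ≤ entropy (Measure.pi fun _ => μ) P)
    (hη : 2 * t * (entropy μ p - entropy μ u) + γ ≤ η) (hη0 : 0 ≤ η) {k : ℕ} (hk : k < n)
    (e : Fin k ↪ Fin n) :
    TVClose (√((k + 1) * η) + k * (√(η / 2) + t)) (P.map fun x i => x (e i))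
      (Measure.pi fun _ => p) := by
  have hhalf : (1 / 2 : ℝ) ∈ Set.Ioo 0 1 := by norm_num
  have ht01 : t ∈ Set.Ioo 0 1 := ⟨ht.1, ht.2.trans_lt hhalf.2⟩
  have := isProbabilityMeasure_mixture (ν := g) (κ := u) ht01
  have := isProbabilityMeasure_mixture (ν := p) (κ := mixture t g u) hhalf
  have hcross := crossEntropy_le_of_entropy_mixture_le hp hg hu ht hup hle
  have htv := tvClose_mixture_of_tvClose (p := p) (g := g) (u := u) (τ := √(η / 2)) ht01
  have hr := mixture_absolutelyContinuous (t := 1 / 2) hp.ac (hg.mixture hu ht01).ac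
  obtain ⟨C, hC, hgC⟩ : ∃ C ≠ ∞, g ≤ C • mixture (1 / 2) p (mixture t g u) :=
    exists_le_smul_mixture_mixture_left hhalf.1 ht01.2
  have hgr := Measure.absolutelyContinuous_of_le_smul hgC
  have hint := hg.integrable_llr_of_le_smul hr hC hgC
  set r := mixture (1 / 2) p (mixture t g u)
  have hkl : ∫ x, llr P (Measure.pi fun _ => r) x ∂P ≤ n * η := by
    rw [integral_llr_pi_right hP hr hmarg hgr hint]
    have hn : n * crossEntropy μ g r ≤ n * (entropy μ p - γ + η) := by gcongr; linarith
    linarith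
  have hac := absolutelyContinuous_pi_of_map_eval hP.ac hr fun i => hmarg i ▸ hgr
  have hint_pi := integrable_llr_pi_right hP hr hmarg hgr hint
  have hblock := hexch.tvClose_map_embedding hac hint_pi hkl hη0 hk e
  have hcoord := hexch.tvClose_map_eval hac hint_pi hkl ⟨0, hk.trans_le' (Nat.zero_le _)⟩
  rw [hmarg] at hcoord
  exact hblock.trans ((htv hcoord).pi k)

end NearMaximal

section MaximumEntropy

open ProbabilityTheory

variable {α J : Type*} {V : J → α → ℝ} {b c c' : J → ℝ} {n : ℕ}

/-- The configurations of `n` points whose empirical mean of `V_j` is at most `c_j`, for all `j`. -/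
def constraintSet (V : J → α → ℝ) (c : J → ℝ) (n : ℕ) : Set (Fin n → α) :=
  {x | ∀ j, ∑ i, V j (x i) ≤ c j * n}

lemma comp_perm_mem_constraintSet (σ : Equiv.Perm (Fin n)) (x : Fin n → α) :
    (fun i => x (σ i)) ∈ constraintSet V c n ↔ x ∈ constraintSet V c n :=
  forall_congr' fun j => by rw [Equiv.sum_comp σ fun i => V j (x i)]

lemma le_of_mem_constraintSet {j : J} (hV0 : ∀ x, 0 ≤ V j x) {x : Fin n → α}
    (hx : x ∈ constraintSet V c n) (i : Fin n) : V j (x i) ≤ c j * n :=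
  (Finset.single_le_sum (fun i _ => hV0 (x i)) (Finset.mem_univ i)).trans (hx j)

lemma constraintSet_subset_pi {j : J} (hV0 : ∀ x, 0 ≤ V j x) :
    constraintSet V c n ⊆ Set.univ.pi fun _ => {x | V j x ≤ c j * n} :=
  fun _ hx i _ => le_of_mem_constraintSet hV0 hx i

variable [MeasurableSpace α] {μ p q u ν κ : Measure α}

/-- The moment constraints `∫ V_j dν ≤ c_j`. -/
def Feasible (V : J → α → ℝ) (c : J → ℝ) (ν : Measure α) : Prop :=
  ∀ j, Integrable (V j) ν ∧ ∫ x, V j x ∂ν ≤ c j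

/-- `p` has maximal entropy among the probability measures satisfying `Feasible V c`. -/
structure IsMaxEntropy (μ : Measure α) (V : J → α → ℝ) (c : J → ℝ) (p : Measure α) : Prop where
  hasFiniteEntropy : HasFiniteEntropy μ p
  feasible : Feasible V c p
  entropy_le : ∀ ν : Measure α, IsProbabilityMeasure ν → HasFiniteEntropy μ ν → Feasible V c ν →
    entropy μ ν ≤ entropy μ p

namespace Feasible

lemma mono (h : Feasible V b ν) (hbc : b ≤ c) : Feasible V c ν :=
  fun j => ⟨(h j).1, (h j).2.trans (hbc j)⟩

protected lemma mixture {t : ℝ} (hν : Feasible V b ν) (hκ : Feasible V c κ)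
    (ht : t ∈ Set.Ioo 0 1) : Feasible V ((1 - t) • b + t • c) (mixture t ν κ) := fun j => by
  refine ⟨((hν j).1.smul_measure ENNReal.ofReal_ne_top).add_measure
    ((hκ j).1.smul_measure ENNReal.ofReal_ne_top), ?_⟩
  rw [integral_mixture ht (hν j).1 (hκ j).1]
  exact add_le_add (mul_le_mul_of_nonneg_left (hν j).2 (sub_pos.2 ht.2).le)
    (mul_le_mul_of_nonneg_left (hκ j).2 ht.1.le)

lemma ae_eventually_mem_constraintSet [Finite J] [IsProbabilityMeasure q]
    (hV : ∀ j, Measurable (V j)) (hq : Feasible V b q) (hbc : ∀ j, b j < c j) :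
    ∀ᵐ ω ∂Measure.infinitePi fun _ : ℕ => q,
      ∀ᶠ n in atTop, (fun i : Fin n => ω i) ∈ constraintSet V c n := by
  filter_upwards [ae_all_iff.2 fun j => ae_tendsto_average (hV j) (hq j).1] with ω hω
  filter_upwards [eventually_all.2 fun j =>
    (hω j).eventually_lt_const ((hq j).2.trans_lt (hbc j)), eventually_gt_atTop 0] with n hn hn0 j
  exact ((div_lt_iff₀ (Nat.cast_pos.2 hn0)).1 (hn j)).le

end Feasible

lemma measurableSet_constraintSet [Countable J] (hV : ∀ j, Measurable (V j)) :
    MeasurableSet (constraintSet V c n) := by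
  simp only [constraintSet, Set.ofPred_forall]
  exact .iInter fun j => measurableSet_le (by fun_prop) measurable_const

lemma pi_constraintSet_ne_top [SigmaFinite μ] {j : J} (hV0 : ∀ x, 0 ≤ V j x)
    (hfin : ∀ a, μ {x | V j x ≤ a} ≠ ∞) : Measure.pi (fun _ => μ) (constraintSet V c n) ≠ ∞ := by
  refine measure_ne_top_of_subset (constraintSet_subset_pi hV0) ?_
  rw [Measure.pi_pi]
  exact ENNReal.prod_ne_top fun _ _ => hfin _

lemma Exchangeable.feasible_map_eval {P : Measure (Fin n → α)} [IsProbabilityMeasure P]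
    (hP : Exchangeable P) (hV : ∀ j, Measurable (V j)) (hV0 : ∀ j x, 0 ≤ V j x)
    (hmem : ∀ᵐ x ∂P, x ∈ constraintSet V c n) (i : Fin n) :
    Feasible V c (P.map fun x => x i) := fun j => by
  have hint (l : Fin n) : Integrable (fun x => V j (x l)) P := by
    refine .of_bound
      ((hV j).comp (measurable_pi_apply l)).aestronglyMeasurable (c j * n) ?_
    filter_upwards [hmem] with x hx
    rw [norm_of_nonneg (hV0 j _)]
    exact le_of_mem_constraintSet (hV0 j) hx l
  have hmap (l : Fin n) : ∫ y, V j y ∂P.map (fun x => x l) = ∫ x, V j (x l) ∂P :=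
    integral_map (measurable_pi_apply l).aemeasurable (hV j).aestronglyMeasurable
  have hn : (0 : ℝ) < n := Nat.cast_pos.2 i.pos
  refine ⟨(integrable_map_measure (hV j).aestronglyMeasurable
    (measurable_pi_apply i).aemeasurable).2 (hint i), le_of_mul_le_mul_right ?_ hn⟩
  calc (∫ y, V j y ∂P.map fun x => x i) * n = ∑ l, ∫ x, V j (x l) ∂P := by
        simp [← hmap, hP.map_eval_eq _ i, mul_comm]
    _ = ∫ x, ∑ l, V j (x l) ∂P := (integral_finsetSum _ fun l _ => hint l).symm
    _ ≤ ∫ _, c j * n ∂P :=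
        integral_mono_ae (integrable_finsetSum _ fun l _ => hint l) (integrable_const _)
          (hmem.mono fun x hx => hx j)
    _ = c j * n := by simp

namespace IsMaxEntropy

variable [SigmaFinite μ] [IsProbabilityMeasure p] [IsProbabilityMeasure u]

lemma entropy_mixture_mixture_le [IsProbabilityMeasure ν] (hp : IsMaxEntropy μ V c p)
    (hν : HasFiniteEntropy μ ν) (hνc : Feasible V c' ν) (hu : HasFiniteEntropy μ u)
    (hub : Feasible V b u) {t : ℝ} (ht : t ∈ Set.Ioo 0 1) (hbc : b ≤ c)
    (hc' : c' ≤ c + t • (c - b)) :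
    entropy μ (mixture (1 / 2) p (mixture t ν u)) ≤ entropy μ p := by
  have hhalf : (1 / 2 : ℝ) ∈ Set.Ioo 0 1 := by norm_num
  have := isProbabilityMeasure_mixture (ν := ν) (κ := u) ht
  have hmix : Feasible V c (mixture t ν u) := (hνc.mixture hub ht).mono fun j => by
    have hbcj := hbc j
    have hcj := mul_le_mul_of_nonneg_left (hc' j) (sub_pos.2 ht.2).le
    have := mul_nonneg (mul_self_nonneg t) (sub_nonneg.2 hbcj)
    simp only [Pi.add_apply, Pi.smul_apply, Pi.sub_apply, smul_eq_mul] at hcj ⊢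
    linarith
  refine hp.entropy_le _ (isProbabilityMeasure_mixture hhalf)
    (hp.hasFiniteEntropy.mixture (hν.mixture hu ht) hhalf)
    ((hp.feasible.mixture hmix hhalf).mono (le_of_eq ?_))
  rw [← add_smul, sub_add_cancel, one_smul]

/-- Moving `p` towards the strictly feasible `u` gives the law of large numbers room to hold with
the constraints `c` themselves, at the price of the entropy gap. -/
lemma eventually_le_log_pi_constraintSet [Finite J] (hp : IsMaxEntropy μ V c p)
    (hV : ∀ j, Measurable (V j))
    {j₀ : J} (hV0 : ∀ x, 0 ≤ V j₀ x) (hfin : ∀ a, μ {x | V j₀ x ≤ a} ≠ ∞)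
    (hu : HasFiniteEntropy μ u) (hub : Feasible V b u) (hbc : ∀ j, b j < c j) (hcc' : c ≤ c')
    {t : ℝ} (ht : t ∈ Set.Ioo 0 1) :
    ∀ᶠ n in atTop, Measure.pi (fun _ => μ) (constraintSet V c' n) ≠ 0 ∧
      n * (entropy μ p - t * (entropy μ p - entropy μ u + 1)) ≤
        log ((Measure.pi fun _ => μ).real (constraintSet V c' n)) := by
  have := isProbabilityMeasure_mixture (ν := p) (κ := u) ht
  have hlt (j : J) : ((1 - t) • c + t • b) j < c' j := by
    refine lt_of_lt_of_le ?_ (hcc' j)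
    have := mul_pos ht.1 (sub_pos.2 (hbc j))
    simp only [Pi.add_apply, Pi.smul_apply, smul_eq_mul]
    linarith
  have hent := hp.hasFiniteEntropy.le_entropy_mixture hu ht
  filter_upwards [eventually_le_log_pi_of_ae_eventually_mem (hp.hasFiniteEntropy.mixture hu ht)
    (fun n => measurableSet_constraintSet hV) (fun n => pi_constraintSet_ne_top hV0 hfin)
    ((hp.feasible.mixture hub ht).ae_eventually_mem_constraintSet hV hlt) ht.1] with n ⟨h0, hn⟩
  refine ⟨h0, (mul_le_mul_of_nonneg_left ?_ n.cast_nonneg).trans hn⟩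
  linarith

theorem eventually_tvClose_of_le [Finite J] (hp : IsMaxEntropy μ V c p)
    (hV : ∀ j, Measurable (V j)) (hV0 : ∀ j x, 0 ≤ V j x)
    {j₀ : J} (hfin : ∀ a, μ {x | V j₀ x ≤ a} ≠ ∞)
    (hu : HasFiniteEntropy μ u) (hub : Feasible V b u) (hbc : ∀ j, b j < c j) (hcc' : c ≤ c')
    {t : ℝ} (ht : t ∈ Set.Ioc 0 (1 / 2)) (hc' : c' ≤ c + t • (c - b)) {η : ℝ}
    (hη : t * (3 * (entropy μ p - entropy μ u) + 1) = η) (k : ℕ) :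
    ∀ᶠ n in atTop, ∀ e : Fin k ↪ Fin n, TVClose (√((k + 1) * η) + k * (√(η / 2) + t))
      ((cond (Measure.pi fun _ => μ) (constraintSet V c' n)).map
        fun x i => x (e i)) (Measure.pi fun _ => p) := by
  have ht01 : t ∈ Set.Ioo 0 1 := ⟨ht.1, ht.2.trans_lt (by norm_num)⟩
  have hup := hp.entropy_le u ‹_› hu (hub.mono fun j => (hbc j).le)
  have hη0 : 0 ≤ η := hη ▸ mul_nonneg ht.1.le (by linarith)
  filter_upwards [hp.eventually_le_log_pi_constraintSet hV (hV0 j₀) hfin hu hub hbc hcc' ht01,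
    eventually_gt_atTop k] with n ⟨h0, hlog⟩ hkn e
  have hK := measurableSet_constraintSet (c := c') (n := n) hV
  have h1 := pi_constraintSet_ne_top (c := c') (n := n) (hV0 j₀) hfin
  set P := cond (Measure.pi fun _ => μ) (constraintSet V c' n)
  have : IsProbabilityMeasure P := cond_isProbabilityMeasure_of_finite h0 h1
  have hexch : Exchangeable P := exchangeable_pi.cond hK comp_perm_mem_constraintSet
  let i₀ : Fin n := ⟨0, hkn.pos⟩
  set g := P.map fun x => x i₀
  have : IsProbabilityMeasure g :=
    Measure.isProbabilityMeasure_map (measurable_pi_apply i₀).aemeasurable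
  have hg : HasFiniteEntropy μ g := hasFiniteEntropy_map_eval_cond h0
    (measurableSet_le (hV j₀) measurable_const) (hfin _) (constraintSet_subset_pi (hV0 j₀)) i₀
  have hgc : Feasible V c' g := hexch.feasible_map_eval hV hV0 (ae_cond_mem hK) i₀
  refine hexch.tvClose_pi_of_le_entropy (hasFiniteEntropy_cond hK h0)
    (fun i => hexch.map_eval_eq i i₀) hp.hasFiniteEntropy hg hu ht hup
    (hp.entropy_mixture_mixture_le hg hgc hu hub ht01 (fun j => (hbc j).le) hc')
    (hlog.trans_eq (entropy_cond hK h0 h1).symm) (le_of_eq ?_) hη0 hkn e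
  linarith

theorem eventually_tvClose [Finite J] (hp : IsMaxEntropy μ V c p) (hV : ∀ j, Measurable (V j))
    (hV0 : ∀ j x, 0 ≤ V j x) {j₀ : J} (hfin : ∀ a, μ {x | V j₀ x ≤ a} ≠ ∞)
    (hu : HasFiniteEntropy μ u) (hub : Feasible V b u) (hbc : ∀ j, b j < c j) (k : ℕ) {δ : ℝ}
    (hδ : 0 < δ) :
    ∀ᶠ c' in 𝓝[≥] c, ∀ᶠ n in atTop, ∀ e : Fin k ↪ Fin n, TVClose δ
      ((cond (Measure.pi fun _ => μ) (constraintSet V c' n)).map fun x i => x (e i))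
      (Measure.pi fun _ => p) := by
  set η : ℝ → ℝ := fun t => t * (3 * (entropy μ p - entropy μ u) + 1)
  have hcont : Continuous fun t => √((k + 1) * η t) + k * (√(η t / 2) + t) := by fun_prop
  have hsmall : ∀ᶠ t in 𝓝[>] 0, √((k + 1) * η t) + k * (√(η t / 2) + t) < δ :=
    (hcont.tendsto 0).eventually_lt_const (by simpa [η] using hδ) |>.filter_mono nhdsWithin_le_nhds
  obtain ⟨t, htδ, ht⟩ :=
    (hsmall.and (Ioc_mem_nhdsGT (by norm_num : (0 : ℝ) < 1 / 2))).exists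
  have hnear : ∀ᶠ c' in 𝓝[≥] c, ∀ j, c' j < (c + t • (c - b)) j := by
    refine eventually_all.2 fun j => nhdsWithin_le_nhds ?_
    refine (continuous_apply j).continuousAt.eventually_lt_const ?_
    simpa using mul_pos ht.1 (sub_pos.2 (hbc j))
  filter_upwards [hnear, self_mem_nhdsWithin] with c' hc' hcc'
  filter_upwards [hp.eventually_tvClose_of_le hV hV0 hfin hu hub hbc hcc' ht
    (fun j => (hc' j).le) rfl k] with n hn e
  exact (hn e).mono htδ.le

end IsMaxEntropy

end MaximumEntropy

section OrliczBall

/-- A potential which is small near `0`, so that laws concentrated there satisfy any positive moment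
bound. This is the common abstraction of the two Orlicz functions in the limit theorem. -/
structure IsPotential (V : ℝ → ℝ) : Prop where
  measurable : Measurable V
  nonneg : ∀ x, 0 ≤ V x
  tendsto_zero : Tendsto V (𝓝 0) (𝓝 0)

namespace IsOrlicz

variable {V : ℝ → ℝ}

lemma continuous (hV : IsOrlicz V) : Continuous V :=
  continuousOn_univ.1 (hV.1.continuousOn isOpen_univ)

lemma isPotential (hV : IsOrlicz V) : IsPotential V :=
  ⟨hV.continuous.measurable, hV.2.2.2.2, hV.continuous.tendsto' 0 0 hV.2.2.1⟩

lemma abs_mul_le (hV : IsOrlicz V) {x : ℝ} (hx : 1 ≤ |x|) : |x| * V 1 ≤ V x := by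
  have hpos : 0 < |x| := one_pos.trans_le hx
  have habs : V |x| = V x := by
    rcases abs_choice x with h | h <;> rw [h]
    exact hV.2.1 x
  have hconv := hV.1.2 (Set.mem_univ |x|) (Set.mem_univ 0) (inv_nonneg.2 hpos.le)
    (sub_nonneg.2 (inv_le_one_of_one_le₀ hx)) (by ring)
  simp only [smul_eq_mul, mul_zero, add_zero, hV.2.2.1, inv_mul_cancel₀ hpos.ne', habs] at hconv
  rwa [inv_mul_eq_div, le_div_iff₀ hpos, mul_comm] at hconv

lemma volume_le_ne_top (hV : IsOrlicz V) (a : ℝ) : volume {x | V x ≤ a} ≠ ∞ := by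
  have hone : 0 < V 1 := hV.2.2.2.1 1 one_ne_zero
  refine measure_ne_top_of_subset (fun x hx => ?_)
    (measure_closedBall_lt_top (x := (0 : ℝ)) (r := max 1 (a / V 1))).ne
  rw [mem_closedBall_zero_iff, norm_eq_abs, le_max_iff, or_iff_not_imp_left, not_le,
    le_div_iff₀ hone]
  exact fun h => (hV.abs_mul_le h.le).trans hx

end IsOrlicz

lemma HasFiniteEntropy.diffEnt_eq {ν : Measure ℝ} (hν : HasFiniteEntropy volume ν) :
    diffEnt ν = entropy volume ν :=
  if_pos ⟨hν.ac, hν.integrable_llr⟩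

lemma hasFiniteEntropy_of_diffEnt_ne_bot {ν : Measure ℝ} (hν : diffEnt ν ≠ ⊥) :
    HasFiniteEntropy volume ν :=
  by_contra fun h => hν (if_neg fun ⟨hac, hint⟩ => h ⟨hac, hint⟩)

lemma mV_le_ofReal_iff {V : ℝ → ℝ} (hV : Measurable V) (hV0 : ∀ x, 0 ≤ V x) {ν : Measure ℝ}
    {c : ℝ} (hc : 0 ≤ c) :
    mV V ν ≤ ENNReal.ofReal c ↔ Integrable V ν ∧ ∫ x, V x ∂ν ≤ c := by
  have hofReal (hint : Integrable V ν) : mV V ν = ENNReal.ofReal (∫ x, V x ∂ν) :=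
    (ofReal_integral_eq_lintegral_ofReal hint (ae_of_all _ hV0)).symm
  refine ⟨fun h => ?_, fun ⟨hint, hle⟩ => (hofReal hint).trans_le (ENNReal.ofReal_le_ofReal hle)⟩
  have hint : Integrable V ν := ⟨hV.aestronglyMeasurable,
    (hasFiniteIntegral_iff_ofReal (ae_of_all _ hV0)).2 (h.trans_lt ENNReal.ofReal_lt_top)⟩
  exact ⟨hint, (ENNReal.ofReal_le_ofReal_iff hc).1 (hofReal hint ▸ h)⟩

lemma exists_feasible_of_tendsto_zero {J : Type*} [Finite J] {V : J → ℝ → ℝ}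
    (hV : ∀ j, IsPotential (V j)) {b : J → ℝ} (hb : ∀ j, 0 < b j) :
    ∃ u : Measure ℝ, IsProbabilityMeasure u ∧ HasFiniteEntropy volume u ∧ Feasible V b u := by
  obtain ⟨r, hr, hball⟩ := Metric.eventually_nhds_iff_ball.1
    (eventually_all.2 fun j => (hV j).tendsto_zero.eventually_le_const (hb j))
  have h0 : volume (Metric.ball (0 : ℝ) r) ≠ 0 := (Metric.measure_ball_pos volume 0 hr).ne'
  have hprob := ProbabilityTheory.cond_isProbabilityMeasure_of_finite h0 measure_ball_lt_top.ne
  refine ⟨_, hprob, hasFiniteEntropy_cond measurableSet_ball h0, fun j => ?_⟩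
  have hle : ∀ᵐ x ∂ProbabilityTheory.cond volume (Metric.ball (0 : ℝ) r), V j x ≤ b j :=
    (ProbabilityTheory.ae_cond_mem measurableSet_ball).mono fun x hx => hball x hx j
  have hint : Integrable (V j) (ProbabilityTheory.cond volume (Metric.ball (0 : ℝ) r)) :=
    .of_bound (hV j).measurable.aestronglyMeasurable (b j)
      (hle.mono fun x hx => (norm_of_nonneg ((hV j).nonneg x)).trans_le hx)
  exact ⟨hint, by simpa using integral_mono_ae hint (integrable_const (b j)) hle⟩

lemma proj_eq_comp_castLEEmb {k n : ℕ} (hkn : k ≤ n) :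
    proj k n = fun x i => x (Fin.castLEEmb hkn i) := by
  ext x i
  exact dif_pos (i.2.trans_le hkn)

section TwoPotentials

variable {V₁ V₂ : ℝ → ℝ} {R : ℝ}

lemma feasible_pair_iff (hV₁ : IsPotential V₁) (hV₂ : IsPotential V₂) (hR : 0 ≤ R) {ν : Measure ℝ} :
    Feasible ![V₁, V₂] ![1, R] ν ↔ mV V₁ ν ≤ 1 ∧ mV V₂ ν ≤ ENNReal.ofReal R := by
  rw [← ENNReal.ofReal_one, mV_le_ofReal_iff hV₁.measurable hV₁.nonneg zero_le_one,
    mV_le_ofReal_iff hV₂.measurable hV₂.nonneg hR, Feasible, Fin.forall_fin_two]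
  rfl

lemma cond_unifBall (hV₁ : IsPotential V₁) (hV₂ : IsPotential V₂)
    (hfin : ∀ a, volume {x | V₁ x ≤ a} ≠ ∞) {n : ℕ} (hn : 0 < n) :
    ProbabilityTheory.cond (unifBall V₁ 1 n) {x | (1 / (n : ℝ)) * ∑ i, V₂ (x i) ≤ R} =
      ProbabilityTheory.cond volume (constraintSet ![V₁, V₂] ![1, R] n) := by
  have hmeas {V : ℝ → ℝ} (hV : IsPotential V) (c : ℝ) : MeasurableSet (OrliczBall V c n) :=
    have := hV.measurable
    measurableSet_le (by fun_prop) measurable_const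
  have hmean : {x : Fin n → ℝ | (1 / (n : ℝ)) * ∑ i, V₂ (x i) ≤ R} = OrliczBall V₂ R n := by
    ext x
    simp only [OrliczBall, Set.mem_ofPred_eq]
    rw [one_div, inv_mul_le_iff₀ (Nat.cast_pos.2 hn), mul_comm (n : ℝ)]
  have hinter : constraintSet ![V₁, V₂] ![1, R] n = OrliczBall V₁ 1 n ∩ OrliczBall V₂ R n := by
    ext x
    exact Fin.forall_fin_two
  have hball : volume (OrliczBall V₁ 1 n) ≠ ∞ :=
    measure_ne_top_of_subset (fun x hx (_ : Unit) => hx)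
      (pi_constraintSet_ne_top (V := fun _ => V₁) (c := fun _ => 1) (j := ()) hV₁.nonneg hfin)
  rw [hmean, hinter]
  exact ProbabilityTheory.cond_cond_eq_cond_inter' (hmeas hV₁ 1) (hmeas hV₂ R) hball

lemma isMaxEntropy_of_diffEnt_le (hV₁ : IsPotential V₁) (hV₂ : IsPotential V₂) (hR : 0 < R)
    {p : Measure ℝ} (hp₁ : mV V₁ p ≤ 1) (hp₂ : mV V₂ p ≤ ENNReal.ofReal R)
    (hmax : ∀ ν : ProbabilityMeasure ℝ, mV V₁ (ν : Measure ℝ) ≤ 1 →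
      mV V₂ (ν : Measure ℝ) ≤ ENNReal.ofReal R → diffEnt (ν : Measure ℝ) ≤ diffEnt p) :
    IsMaxEntropy volume ![V₁, V₂] ![1, R] p := by
  have hmax' (ν : Measure ℝ) (hprob : IsProbabilityMeasure ν)
      (hν : Feasible ![V₁, V₂] ![1, R] ν) : diffEnt ν ≤ diffEnt p :=
    have h := (feasible_pair_iff hV₁ hV₂ hR.le).1 hν
    hmax ⟨ν, hprob⟩ h.1 h.2
  obtain ⟨u, hprob, hu, huc⟩ := exists_feasible_of_tendsto_zero
    (Fin.forall_fin_two.2 ⟨hV₁, hV₂⟩ : ∀ j, IsPotential (![V₁, V₂] j))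
    (Fin.forall_fin_two.2 ⟨one_pos, hR⟩ : ∀ j, 0 < ![1, R] j)
  have hp : HasFiniteEntropy volume p := hasFiniteEntropy_of_diffEnt_ne_bot
    (ne_bot_of_le_ne_bot (by simp [hu.diffEnt_eq]) (hmax' u hprob huc))
  refine ⟨hp, (feasible_pair_iff hV₁ hV₂ hR.le).2 ⟨hp₁, hp₂⟩, fun ν hprob hν hνc => ?_⟩
  have hle := hmax' ν hprob hνc
  rwa [hν.diffEnt_eq, hp.diffEnt_eq, EReal.coe_le_coe_iff] at hle

end TwoPotentials

theorem stmt17_general (V₁ V₂ : ℝ → ℝ) (hV₁ : IsPotential V₁) (hV₂ : IsPotential V₂)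
    (hfin : ∀ a, volume {x | V₁ x ≤ a} ≠ ∞) (R : ℝ) (hR : 0 < R) (k : ℕ)
    (νstar : ProbabilityMeasure ℝ)
    (hν₁ : mV V₁ (νstar : Measure ℝ) ≤ 1) (hν₂ : mV V₂ (νstar : Measure ℝ) ≤ ENNReal.ofReal R)
    (hmax : ∀ ν : ProbabilityMeasure ℝ,
      mV V₁ (ν : Measure ℝ) ≤ 1 → mV V₂ (ν : Measure ℝ) ≤ ENNReal.ofReal R →
        diffEnt (ν : Measure ℝ) ≤ diffEnt (νstar : Measure ℝ)) :
    ∀ δ : ℝ, 0 < δ → ∃ ε₀ : ℝ, 0 < ε₀ ∧ ∀ ε : ℝ, 0 ≤ ε → ε ≤ ε₀ →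
      ∃ N : ℕ, ∀ n : ℕ, N ≤ n →
        TVClose δ
          (Measure.map (proj k n)
            (ProbabilityTheory.cond (unifBall V₁ 1 n)
              {x : Fin n → ℝ | (1 / (n : ℝ)) * ∑ i, V₂ (x i) ≤ R + ε}))
          (Measure.pi fun _ : Fin k => (νstar : Measure ℝ)) := by
  intro δ hδ
  have hV : ∀ j, IsPotential (![V₁, V₂] j) := Fin.forall_fin_two.2 ⟨hV₁, hV₂⟩
  have hmid : ∀ j, 0 < ![1 / 2, R / 2] j := Fin.forall_fin_two.2 ⟨half_pos one_pos, half_pos hR⟩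
  obtain ⟨u, _, hu, huc⟩ := exists_feasible_of_tendsto_zero hV hmid
  have hnear := (isMaxEntropy_of_diffEnt_le hV₁ hV₂ hR hν₁ hν₂ hmax).eventually_tvClose
    (fun j => (hV j).measurable) (fun j => (hV j).nonneg) (j₀ := 0) hfin hu huc
    (Fin.forall_fin_two.2 ⟨one_half_lt_one, half_lt_self hR⟩) k hδ
  have hcont : Continuous fun ε : ℝ => ![1, R + ε] := by fun_prop
  have htendsto : Tendsto (fun ε : ℝ => ![1, R + ε]) (𝓝[≥] 0) (𝓝[≥] ![1, R]) := by
    refine tendsto_nhdsWithin_iff.2 ⟨(hcont.tendsto' 0 _ (by simp)).mono_left nhdsWithin_le_nhds,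
      eventually_mem_nhdsWithin.mono fun ε hε => ?_⟩
    exact Fin.forall_fin_two.2 ⟨le_rfl, le_add_of_nonneg_right hε⟩
  obtain ⟨ε₀, hε₀, hIcc⟩ := mem_nhdsGE_iff_exists_Icc_subset.1 (htendsto.eventually hnear)
  refine ⟨ε₀, hε₀, fun ε hε hle => eventually_atTop.1 ?_⟩
  filter_upwards [hIcc ⟨hε, hle⟩, eventually_gt_atTop k] with n hn hkn
  rw [cond_unifBall hV₁ hV₂ hfin hkn.pos, proj_eq_comp_castLEEmb hkn.le]
  exact hn _

end OrliczBall

/-- The first `k` coordinates of a uniform random point on `B₁^{n,V₁}`, conditioned on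
`(1/n) ∑ V₂(xᵢ) ≤ R + ε`, converge weakly (as `n → ∞` followed by `ε → 0`) to the
`k`-fold product of the entropy maximizer `ν*`. -/
theorem stmt17 (V₁ V₂ : ℝ → ℝ) (hV₁ : IsOrlicz V₁) (hV₂ : IsOrlicz V₂)
    (hgrow : Tendsto (fun x : ℝ => V₁ x / V₂ x) (atTop ⊔ atBot) atTop)
    (R : ℝ) (hR : 0 < R) (k : ℕ)
    (νstar : ProbabilityMeasure ℝ)
    (hν₁ : mV V₁ (νstar : Measure ℝ) ≤ 1) (hν₂ : mV V₂ (νstar : Measure ℝ) ≤ ENNReal.ofReal R)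
    (hmax : ∀ ν : ProbabilityMeasure ℝ,
      mV V₁ (ν : Measure ℝ) ≤ 1 → mV V₂ (ν : Measure ℝ) ≤ ENNReal.ofReal R →
        diffEnt (ν : Measure ℝ) ≤ diffEnt (νstar : Measure ℝ))
    (huniq : ∀ ν : ProbabilityMeasure ℝ,
      mV V₁ (ν : Measure ℝ) ≤ 1 → mV V₂ (ν : Measure ℝ) ≤ ENNReal.ofReal R →
        diffEnt (ν : Measure ℝ) = diffEnt (νstar : Measure ℝ) → ν = νstar) :
    ∀ δ : ℝ, 0 < δ → ∃ ε₀ : ℝ, 0 < ε₀ ∧ ∀ ε : ℝ, 0 < ε → ε ≤ ε₀ →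
      ∃ N : ℕ, ∀ n : ℕ, N ≤ n →
        levyProkhorovDist
          (Measure.map (proj k n)
            (ProbabilityTheory.cond (unifBall V₁ 1 n)
              {x : Fin n → ℝ | (1 / (n : ℝ)) * ∑ i, V₂ (x i) ≤ R + ε}))
          (Measure.pi fun _ : Fin k => (νstar : Measure ℝ)) < δ := fun δ hδ =>
  let ⟨ε₀, hε₀, h⟩ := stmt17_general V₁ V₂ hV₁.isPotential hV₂.isPotential hV₁.volume_le_ne_top
    R hR k νstar hν₁ hν₂ hmax (δ / 2) (half_pos hδ)
  ⟨ε₀, hε₀, fun ε hε hle => (h ε hε.le hle).imp fun _ hN n hn =>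
    (hN n hn).levyProkhorovDist_le.trans_lt (half_lt_self hδ)⟩
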